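/- Let H be an n × n Hermitian complex matrix and ρ a density matrix satisfying the ground state condition: Re tr(ρ A†(HA − AH)) ≥ 0 for every n × n complex matrix A. Let M be an orthogonal projection (M² = M = M†) commuting with H (MH = HM) such that tr(MρM) ≠ 0. Then ρ_M := MρM / tr(MρM) is again a density matrix, and ρ_M also satisfies the ground state condition: Re tr(ρ_M A†(HA − AH)) ≥ 0 for every n × n complex matrix A. -/

import Mathlib

open Matrix
open scoped ComplexOrder

/-! If `M` commutes with `H`, then `[H, AM] = [H, A]M`, so cyclicity of the trace gives
`tr (MρM† A†[H, A]) = tr (ρ (AM)†[H, AM])`: testing the restricted state against `A` amounts to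
testing `ρ` against `AM`. -/

theorem commutator_mul_of_commute {R : Type*} [NonUnitalRing R] {H M : R} (hHM : Commute H M)
    (A : R) : ⁅H, A * M⁆ = ⁅H, A⁆ * M := by
  rw [Ring.lie_def, Ring.lie_def, sub_mul, mul_assoc A M H, ← hHM.eq, mul_assoc, mul_assoc]

theorem trace_conj_mul_conjTranspose_mul_commutator {n R : Type*} [Fintype n] [CommRing R]
    [StarRing R] {H M : Matrix n n R} (hHM : Commute H M) (ρ A : Matrix n n R) :
    (M * ρ * Mᴴ * Aᴴ * ⁅H, A⁆).trace = (ρ * (A * M)ᴴ * ⁅H, A * M⁆).trace :=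
  calc (M * ρ * Mᴴ * Aᴴ * ⁅H, A⁆).trace
    _ = (M * (ρ * (A * M)ᴴ * ⁅H, A⁆)).trace := by
      simp only [conjTranspose_mul, Matrix.mul_assoc]
    _ = (ρ * (A * M)ᴴ * (⁅H, A⁆ * M)).trace := by
      rw [trace_mul_comm, Matrix.mul_assoc _ _ M]
    _ = (ρ * (A * M)ᴴ * ⁅H, A * M⁆).trace := by
      rw [commutator_mul_of_commute hHM]

section RCLike

variable {𝕜 n : Type*} [RCLike 𝕜] [Fintype n]

/-- A density matrix, the finite-dimensional form of a state: a positive semidefinite matrix of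
trace `1`. -/
structure IsDensityMatrix (ρ : Matrix n n 𝕜) : Prop where
  posSemidef : ρ.PosSemidef
  trace_eq_one : ρ.trace = 1

/-- The ground state condition for `ρ` with respect to the Hamiltonian `H`: no perturbation `A`
lowers the energy. Positivity of the trace is imposed on its real part. -/
def GroundStateCondition (H ρ : Matrix n n 𝕜) : Prop :=
  ∀ A : Matrix n n 𝕜, 0 ≤ RCLike.re (ρ * Aᴴ * ⁅H, A⁆).trace

/-- The renormalised restriction of `ρ` by `M`: the density matrix of the state
`X ↦ ω (M† X M) / ω (M† M)`, where `ω X = tr (ρ X)`. It is `0` if the normalising trace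
vanishes. -/
def restrictedState (M ρ : Matrix n n 𝕜) : Matrix n n 𝕜 :=
  (M * ρ * Mᴴ).trace⁻¹ • (M * ρ * Mᴴ)

theorem isDensityMatrix_inv_trace_smul {P : Matrix n n 𝕜} (hP : P.PosSemidef)
    (htrace : P.trace ≠ 0) : IsDensityMatrix (P.trace⁻¹ • P) where
  posSemidef := hP.smul (inv_nonneg.2 hP.trace_nonneg)
  trace_eq_one := by rw [trace_smul, smul_eq_mul, inv_mul_cancel₀ htrace]

namespace GroundStateCondition

variable {H ρ : Matrix n n 𝕜}

theorem smul (hρ : GroundStateCondition H ρ) {c : 𝕜} (hc : 0 ≤ c) :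
    GroundStateCondition H (c • ρ) := by
  intro A
  obtain ⟨r, hr, rfl⟩ := RCLike.nonneg_iff_exists_ofReal.1 hc
  rw [smul_mul, smul_mul, trace_smul, smul_eq_mul, RCLike.re_ofReal_mul]
  exact mul_nonneg hr (hρ A)

theorem mul_mul_conjTranspose (hρ : GroundStateCondition H ρ) {M : Matrix n n 𝕜}
    (hHM : Commute H M) : GroundStateCondition H (M * ρ * Mᴴ) := by
  intro A
  rw [trace_conj_mul_conjTranspose_mul_commutator hHM]
  exact hρ (A * M)

end GroundStateCondition

theorem restricted_state_is_ground_state_general {H ρ M : Matrix n n 𝕜} (hρ : ρ.PosSemidef)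
    (hground : GroundStateCondition H ρ) (hHM : Commute H M)
    (htrace : (M * ρ * Mᴴ).trace ≠ 0) :
    IsDensityMatrix (restrictedState M ρ) ∧ GroundStateCondition H (restrictedState M ρ) := by
  have hpos : (M * ρ * Mᴴ).PosSemidef := hρ.mul_mul_conjTranspose_same M
  have hscale : 0 ≤ (M * ρ * Mᴴ).trace⁻¹ := inv_nonneg.2 hpos.trace_nonneg
  exact ⟨isDensityMatrix_inv_trace_smul hpos htrace,
    (hground.mul_mul_conjTranspose hHM).smul hscale⟩

end RCLike

/-- **Restriction of a ground state by a commuting projector is a ground state.**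
Let `ρ` be a density matrix satisfying the ground state condition
`Re tr(ρ A†[H,A]) ≥ 0` for every matrix `A`, with `H` Hermitian.  If `M` is an
orthogonal projection commuting with `H` and `tr(MρM) ≠ 0`, then
`ρ_M := MρM / tr(MρM)` is again a density matrix satisfying the ground state
condition. -/
theorem restricted_state_is_ground_state {n : Type*} [Fintype n] [DecidableEq n]
    (ρ H M : Matrix n n ℂ) (hρ : ρ.PosSemidef) (htr : ρ.trace = 1)
    (hH : H.IsHermitian)
    (hgs : ∀ A : Matrix n n ℂ, 0 ≤ ((ρ * Aᴴ * (H * A - A * H)).trace).re)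
    (hM2 : M * M = M) (hMH : Mᴴ = M) (hcomm : M * H = H * M)
    (hne : (M * ρ * M).trace ≠ 0) :
    (((M * ρ * M).trace)⁻¹ • (M * ρ * M)).PosSemidef ∧
      (((M * ρ * M).trace)⁻¹ • (M * ρ * M)).trace = 1 ∧
      ∀ A : Matrix n n ℂ,
        0 ≤ (((((M * ρ * M).trace)⁻¹ • (M * ρ * M)) * Aᴴ * (H * A - A * H)).trace).re := by
  have h := restricted_state_is_ground_state_general hρ hgs hcomm.symm (by rwa [hMH])
  rw [restrictedState, hMH] at h
  exact ⟨h.1.posSemidef, h.1.trace_eq_one, h.2⟩
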